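/- For every n ≥ 16 with n ≡ 0 (mod 4), the alternating configuration of n pegs can be sorted in ⌈n/2⌉ + 1 Berge 3-moves; hence ⌈n/2⌉ ≤ h(n,3) ≤ ⌈n/2⌉ + 1 for such n. The solution for n = 4i ≥ 16: perform the 2 chained moves {4i+1, 2, 4i−3} (triple at 2 goes to 4i+1, triple at 4i−3 goes to 2), then sort the 4i−10 pegs at positions 7,...,2i+4 and 2i+7,...,4i−2... (i.e., the middle 4i−10 pegs, ignoring the six leftmost and four rightmost pegs) using the solution for n−10 ≡ 2 (mod 4) shifted six places right, then perform the 4 chained moves {7, 4i, 6, 2i+2, 1}. -/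

import Mathlib

/-- A board configuration has finite support: only finitely many positions hold pegs. -/
def FinSupp (c : ℤ → Option Bool) : Prop := {p : ℤ | (c p).isSome}.Finite

/-- The disorder: number of pegs `p` such that it is NOT the case that the next peg
to the right of `p` exists and has the same color. -/
noncomputable def disorder (c : ℤ → Option Bool) : ℕ :=
  Set.ncard {p : ℤ | (c p).isSome ∧
    ¬ ∃ q : ℤ, p < q ∧ c q = c p ∧ ∀ r : ℤ, p < r → r < q → c r = none}

/-- A Berge `k`-move taking the `k` pegs at positions `i, i+1, ..., i+k-1` to the
`k` vacant positions `j, j+1, ..., j+k-1`, preserving order. -/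
def MoveTo (k : ℕ) (i j : ℤ) (c c' : ℤ → Option Bool) : Prop :=
  (j + k ≤ i ∨ i + k ≤ j) ∧
  (∀ t : ℤ, 0 ≤ t → t < k → (c (i + t)).isSome ∧ c (j + t) = none) ∧
  c' = fun p => if j ≤ p ∧ p < j + k then c (i + (p - j))
    else if i ≤ p ∧ p < i + k then none else c p

/-- A Berge `k`-move from some source to some destination. -/
def BergeMove (k : ℕ) (c c' : ℤ → Option Bool) : Prop :=
  ∃ i j : ℤ, MoveTo k i j c c'

/-- The alternating configuration of `n` pegs: pegs at positions `1,...,n`,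
white (`true`) at odd positions and black (`false`) at even positions. -/
def altConfig (n : ℕ) : ℤ → Option Bool :=
  fun p => if 1 ≤ p ∧ p ≤ (n : ℤ) then some (decide (p % 2 = 1)) else none

/-- A sorted configuration of `n` pegs: a contiguous block of `n` pegs, the first
`⌈n/2⌉` of one color, followed by the remaining `⌊n/2⌋` of the other color. -/
def IsSorted (n : ℕ) (c : ℤ → Option Bool) : Prop :=
  ∃ j : ℤ, ∃ w : Bool,
    (∀ p : ℤ, (c p).isSome ↔ (j ≤ p ∧ p < j + (n : ℤ))) ∧
    (∀ p : ℤ, j ≤ p → p < j + (((n + 1) / 2 : ℕ) : ℤ) → c p = some w) ∧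
    (∀ p : ℤ, j + (((n + 1) / 2 : ℕ) : ℤ) ≤ p → p < j + (n : ℤ) → c p = some (!w))

/-- The alternating configuration of `n` pegs can be sorted in `m` Berge `k`-moves. -/
def SortsIn (k n m : ℕ) : Prop :=
  ∃ f : ℕ → (ℤ → Option Bool), f 0 = altConfig n ∧
    (∀ i < m, BergeMove k (f i) (f (i + 1))) ∧ IsSorted n (f m)

/-!
Lower bound: look at the pairs of neighbouring cells holding pegs of the same colour. The landed
block touches the remaining pegs at its two ends only, so a move creates at most two such pairs; the
first move starts from a contiguous row and lands outside it, so it creates at most one. There are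
none at the start and `n - 2` at the end, hence `m` moves sort at most `2 * m + 1` pegs.

Upper bound: two moves turn the alternating row of `4 * a + 16` pegs into an alternating row of
`4 * a + 6` pegs between six pegs on its left and four on its right. The chain of moves for the
middle row sorts it and shifts it by three cells, after which four moves absorb the ten outer pegs.
-/

/-- The left members of the pairs of neighbouring cells that hold pegs of the same colour. The
lower bound counts these pairs: there are `n - 2` of them in a sorted configuration. -/
def monoPairs (c : ℤ → Option Bool) : Set ℤ := {p | ∃ w, c p = some w ∧ c (p + 1) = some w}

section LowerBound

variable {k n m : ℕ} {i j : ℤ} {c c' : ℤ → Option Bool}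

theorem ordConnected_isSome_altConfig (n : ℕ) :
    {p | (altConfig n p).isSome}.OrdConnected := by
  have : {p | (altConfig n p).isSome} = Set.Icc 1 (n : ℤ) := by
    ext p
    simp [altConfig]
  rw [this]
  exact Set.ordConnected_Icc

theorem monoPairs_altConfig (n : ℕ) : monoPairs (altConfig n) = ∅ := by
  refine Set.eq_empty_iff_forall_notMem.2 fun p ⟨w, hp, hp'⟩ => ?_
  have hparity : decide (p % 2 = 1) = decide ((p + 1) % 2 = 1) := by
    grind [altConfig]
  rw [decide_eq_decide] at hparity
  omega

theorem MoveTo.encard_monoPairs_le (h : MoveTo k i j c c') :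
    (monoPairs c').encard ≤ (monoPairs c).encard + (monoPairs c' ∩ {j - 1, j + k - 1}).encard := by
  let origin : ℤ → ℤ := fun p => if j ≤ p ∧ p < j + k then i + (p - j) else p
  -- Apart from the pairs at the two ends of the landed block, both cells of a pair have moved
  -- together or not at all.
  have hmaps : Set.MapsTo origin (monoPairs c' \ {j - 1, j + k - 1}) (monoPairs c) := by
    rintro p ⟨⟨w, hp, hp'⟩, hpT⟩
    simp only [Set.mem_insert_iff, Set.mem_singleton_iff, not_or] at hpT
    obtain ⟨_, _, rfl⟩ := h
    refine ⟨w, ?_, ?_⟩ <;> grind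
  have hinj : Set.InjOn origin (monoPairs c' \ {j - 1, j + k - 1}) := by
    rintro p ⟨⟨w, hp, -⟩, -⟩ q ⟨⟨w', hq, -⟩, -⟩ hpq
    obtain ⟨_, _, rfl⟩ := h
    grind
  calc (monoPairs c').encard
      = (monoPairs c' \ {j - 1, j + k - 1}).encard
          + (monoPairs c' ∩ {j - 1, j + k - 1}).encard :=
        (Set.encard_sdiff_add_encard_inter _ _).symm
    _ ≤ _ := add_le_add_left (Set.encard_le_encard_of_injOn hmaps hinj) _

theorem BergeMove.encard_monoPairs_le (h : BergeMove k c c') :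
    (monoPairs c').encard ≤ (monoPairs c).encard + 2 := by
  obtain ⟨i, j, h⟩ := h
  refine h.encard_monoPairs_le.trans ?_
  gcongr
  refine (Set.encard_le_encard Set.inter_subset_right).trans ?_
  exact (Set.encard_insert_le _ _).trans_eq (by rw [Set.encard_singleton, one_add_one_eq_two])

theorem BergeMove.encard_monoPairs_le_of_ordConnected (h : BergeMove k c c')
    (hc : {p | (c p).isSome}.OrdConnected) :
    (monoPairs c').encard ≤ (monoPairs c).encard + 1 := by
  obtain ⟨i, j, h⟩ := h
  refine h.encard_monoPairs_le.trans ?_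
  gcongr
  have hends : j - 1 ∈ monoPairs c' → j + k - 1 ∈ monoPairs c' → k = 0 := by
    rintro ⟨w, hl, -⟩ ⟨w', -, hr⟩
    by_contra hk
    obtain ⟨hij, hcells, rfl⟩ := h
    have hl' : (c (j - 1)).isSome := by grind
    have hr' : (c (j + k)).isSome := by grind
    have hj : (c j).isSome := hc.out hl' hr' ⟨by omega, by omega⟩
    have hvacant : c j = none := by simpa using (hcells 0 le_rfl (by omega)).2
    simp [hvacant] at hj
  rw [Set.encard_le_one_iff_subsingleton]
  rintro p ⟨hp, rfl | rfl⟩ q ⟨hq, rfl | rfl⟩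
  · rfl
  · simp [hends hp hq]
  · simp [hends hq hp]
  · rfl

theorem IsSorted.le_encard_monoPairs (h : IsSorted n c) :
    (n : ℕ∞) ≤ (monoPairs c).encard + 2 := by
  obtain ⟨j, w, -, hleft, hright⟩ := h
  set m : ℤ := (((n + 1) / 2 : ℕ) : ℤ)
  set s : Finset ℤ := (Finset.Ico j (j + n - 1)).erase (j + m - 1)
  have hsub : (s : Set ℤ) ⊆ monoPairs c := by
    intro p hp
    simp only [s, Finset.mem_coe, Finset.mem_erase, Finset.mem_Ico] at hp
    obtain hpm | hpm := lt_or_ge p (j + m)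
    · exact ⟨w, hleft p (by omega) hpm, hleft (p + 1) (by omega) (by omega)⟩
    · exact ⟨!w, hright p hpm (by omega), hright (p + 1) (by omega) (by omega)⟩
  have hcard : n ≤ s.card + 2 := by
    have : (Finset.Ico j (j + n - 1)).card - 1 ≤ s.card := Finset.pred_card_le_card_erase
    rw [Int.card_Ico] at this
    omega
  calc (n : ℕ∞) ≤ (s : Set ℤ).encard + 2 := by
        rw [Set.encard_coe_eq_coe_finsetCard]
        exact_mod_cast hcard
    _ ≤ (monoPairs c).encard + 2 := by gcongr

theorem SortsIn.half_le (hn : 3 ≤ n) (h : SortsIn k n m) : n / 2 ≤ m := by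
  obtain ⟨f, hstart, hmoves, hsorted⟩ := h
  have hfinal := hsorted.le_encard_monoPairs
  obtain _ | m := m
  · rw [hstart, monoPairs_altConfig, Set.encard_empty] at hfinal
    norm_cast at hfinal
    omega
  have hcount : ∀ l ≤ m, (monoPairs (f (l + 1))).encard ≤ (2 * l + 1 : ℕ) := by
    intro l hl
    induction l with
    | zero =>
      have := (hmoves 0 m.succ_pos).encard_monoPairs_le_of_ordConnected
        (hstart ▸ ordConnected_isSome_altConfig n)
      simpa [hstart, monoPairs_altConfig] using this
    | succ l ih =>
      calc (monoPairs (f (l + 2))).encard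
          ≤ (monoPairs (f (l + 1))).encard + 2 :=
            (hmoves (l + 1) (by omega)).encard_monoPairs_le
        _ ≤ (2 * l + 1 : ℕ) + 2 := by gcongr; exact ih (by omega)
        _ = (2 * (l + 1) + 1 : ℕ) := by norm_cast
  have hle : (n : ℕ∞) ≤ (2 * m + 1 : ℕ) + 2 := hfinal.trans (by gcongr; exact hcount m le_rfl)
  norm_cast at hle
  omega

end LowerBound

section StepCount

variable {α β : Type*} {r : α → α → Prop} {s : β → β → Prop}

/-- `ReachesIn r m a b` says that exactly `m` successive `r`-steps lead from `a` to `b`. -/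
inductive ReachesIn (r : α → α → Prop) : ℕ → α → α → Prop
  | refl (a : α) : ReachesIn r 0 a a
  | head {m : ℕ} {a b c : α} : r a b → ReachesIn r m b c → ReachesIn r (m + 1) a c

namespace ReachesIn

variable {m n : ℕ} {a b c : α}

theorem single (h : r a b) : ReachesIn r 1 a b := head h (refl b)

-- With this order of summands the counts in the `calc` chains below reduce definitionally.
theorem trans (hab : ReachesIn r m a b) (hbc : ReachesIn r n b c) : ReachesIn r (n + m) a c := by
  induction hab with
  | refl => exact hbc
  | head h _ ih => exact head h (ih hbc)

instance : Trans (ReachesIn r m) (ReachesIn r n) (ReachesIn r (n + m)) := ⟨trans⟩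

theorem map (f : α → β) (hf : ∀ ⦃a b⦄, r a b → s (f a) (f b)) (h : ReachesIn r m a b) :
    ReachesIn s m (f a) (f b) := by
  induction h with
  | refl a => exact refl (f a)
  | head h _ ih => exact head (hf h) ih

theorem exists_seq (h : ReachesIn r m a b) :
    ∃ f : ℕ → α, f 0 = a ∧ (∀ i < m, r (f i) (f (i + 1))) ∧ f m = b := by
  induction h with
  | refl a => exact ⟨fun _ => a, rfl, by simp, rfl⟩
  | @head m a b c hab _ ih =>
    obtain ⟨f, hstart, hstep, hend⟩ := ih
    refine ⟨fun i => i.casesOn a f, rfl, fun i hi => ?_, hend⟩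
    obtain _ | i := i
    · change r a (f 0)
      rwa [hstart]
    · exact hstep i (by omega)

end ReachesIn

end StepCount

section Words

variable {k : ℕ}

/-- A Berge `k`-move on a word of cells: a block `X` of `k` pegs changes places with a stretch of
`k` empty cells. -/
inductive WordMove (k : ℕ) : List (Option Bool) → List (Option Bool) → Prop
  | right (A B C : List (Option Bool)) {X : List (Option Bool)} :
      X.length = k → (∀ x ∈ X, x.isSome) →
      WordMove k (A ++ X ++ B ++ List.replicate k none ++ C)
        (A ++ List.replicate k none ++ B ++ X ++ C)
  | left (A B C : List (Option Bool)) {X : List (Option Bool)} :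
      X.length = k → (∀ x ∈ X, x.isSome) →
      WordMove k (A ++ List.replicate k none ++ B ++ X ++ C)
        (A ++ X ++ B ++ List.replicate k none ++ C)

theorem WordMove.append {L M : List (Option Bool)} (h : WordMove k L M)
    (P Q : List (Option Bool)) : WordMove k (P ++ L ++ Q) (P ++ M ++ Q) := by
  cases h with
  | right A B C hlen hX => simpa using right (P ++ A) B (C ++ Q) hlen hX
  | left A B C hlen hX => simpa using left (P ++ A) B (C ++ Q) hlen hX

/-- The configuration with the cells of a word at positions `1, 2, ...`, empty elsewhere. -/
def place : List (Option Bool) → ℤ → Option Bool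
  | [], _ => none
  | x :: L, p => if p = 1 then x else place L (p - 1)

theorem place_eq_none {L : List (Option Bool)} {p : ℤ} (hp : p < 1 ∨ L.length < p) :
    place L p = none := by
  induction L generalizing p with
  | nil => rfl
  | cons x L ih => grind [place]

theorem place_append (L M : List (Option Bool)) (p : ℤ) :
    place (L ++ M) p = if p ≤ L.length then place L p else place M (p - L.length) := by
  induction L generalizing p with
  | nil => grind [place, place_eq_none]
  | cons x L ih => grind [place]

theorem place_replicate (a : ℕ) (x : Option Bool) (p : ℤ) :
    place (List.replicate a x) p = if 1 ≤ p ∧ p ≤ a then x else none := by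
  induction a generalizing p with
  | zero => grind [place]
  | succ a ih => grind [place]

theorem isSome_place_iff {X : List (Option Bool)} (hX : ∀ x ∈ X, x.isSome) (p : ℤ) :
    (place X p).isSome ↔ 1 ≤ p ∧ p ≤ X.length := by
  induction X generalizing p with
  | nil => grind [place]
  | cons x X ih => grind [place]

theorem WordMove.bergeMove_place {L M : List (Option Bool)} (h : WordMove k L M) :
    BergeMove k (place L) (place M) := by
  cases h with
  | @right A B C X hlen hX =>
    have := isSome_place_iff hX
    refine ⟨A.length + 1, A.length + k + B.length + 1, Or.inr (by omega), fun t ht htk => ?_,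
      funext fun p => ?_⟩ <;>
    simp only [place_append, place_replicate, List.length_append, List.length_replicate] <;>
    grind
  | @left A B C X hlen hX =>
    have := isSome_place_iff hX
    refine ⟨A.length + k + B.length + 1, A.length + 1, Or.inl (by omega), fun t ht htk => ?_,
      funext fun p => ?_⟩ <;>
    simp only [place_append, place_replicate, List.length_append, List.length_replicate] <;>
    grind

theorem place_append_replicate_none (L : List (Option Bool)) (a : ℕ) :
    place (L ++ List.replicate a none) = place L := by
  funext p
  grind [place_append, place_replicate, place_eq_none]

/-- `a` copies of the two-letter word `x (!x)`. -/
def alternating (x : Bool) : ℕ → List (Option Bool)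
  | 0 => []
  | a + 1 => some x :: some (!x) :: alternating x a

theorem place_alternating (a : ℕ) : place (alternating true a) = altConfig (2 * a) := by
  ext1 p
  induction a generalizing p with
  | zero => grind [alternating, place, altConfig]
  | succ a ih =>
    have hparity : (p - 1 - 1) % 2 = p % 2 := by omega
    simp only [alternating, place, ih, altConfig, hparity]
    obtain rfl | h₁ := eq_or_ne p 1
    · grind
    obtain rfl | h₂ := eq_or_ne p 2 <;> grind

theorem isSorted_place (g h : ℕ) (w : Bool) :
    IsSorted (2 * h) (place (List.replicate g none ++ List.replicate h (some w) ++
      List.replicate h (some !w))) := by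
  refine ⟨g + 1, w, ?_, ?_, ?_⟩ <;>
    simp only [place_append, place_replicate, List.length_append, List.length_replicate] <;>
    grind

end Words

theorem alternating_add (x : Bool) (a b : ℕ) :
    alternating x (a + b) = alternating x a ++ alternating x b := by
  induction a with
  | zero => simp [alternating]
  | succ a ih => simp [Nat.add_right_comm, alternating, ih]

theorem alternating_succ' (x : Bool) (a : ℕ) :
    alternating x (a + 1) = alternating x a ++ [some x, some (!x)] :=
  alternating_add x a 1

theorem alternating_append_cons (x : Bool) (a : ℕ) (L : List (Option Bool)) :
    alternating x a ++ some x :: L = some x :: (alternating (!x) a ++ L) := by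
  induction a with
  | zero => rfl
  | succ a ih => simp [alternating, ih]

theorem replicate_append_cons_self {α : Type*} (a : ℕ) (x : α) (L : List α) :
    List.replicate a x ++ x :: L = x :: (List.replicate a x ++ L) := by
  induction a with
  | zero => rfl
  | succ a ih => simp [List.replicate_succ, ih]

theorem sortsIn_of_reachesIn {k a b g m : ℕ} {w : Bool}
    (h : ReachesIn (WordMove k) m (alternating true a ++ List.replicate b none)
      (List.replicate g none ++ List.replicate a (some w) ++ List.replicate a (some !w))) :
    SortsIn k (2 * a) m := by
  obtain ⟨f, hstart, hmoves, hend⟩ := (h.map place fun _ _ => WordMove.bergeMove_place).exists_seq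
  refine ⟨f, ?_, hmoves, ?_⟩
  · rw [hstart, place_append_replicate_none, place_alternating]
  · exact hend ▸ isSorted_place g a w

section Solution

open List

local notation "○" => some true
local notation "●" => some false
local notation "◌" => none
local notation:50 L:51 "⇝[" m "]" M:51 => ReachesIn (WordMove 3) m L M

theorem reachesIn_one_right (A B C : List (Option Bool)) (x y z : Bool) :
    ReachesIn (WordMove 3) 1 (A ++ [some x, some y, some z] ++ B ++ [◌, ◌, ◌] ++ C)
      (A ++ [◌, ◌, ◌] ++ B ++ [some x, some y, some z] ++ C) :=
  .single (.right A B C rfl (by simp))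

theorem reachesIn_one_left (A B C : List (Option Bool)) (x y z : Bool) :
    ReachesIn (WordMove 3) 1 (A ++ [◌, ◌, ◌] ++ B ++ [some x, some y, some z] ++ C)
      (A ++ [some x, some y, some z] ++ B ++ [◌, ◌, ◌] ++ C) :=
  .single (.left A B C rfl (by simp))

-- Invariant of the chain of moves: `p` and `q` count the white and the black pegs collected so far,
-- and a round of two moves raises both by two.
theorem reachesIn_collect (a p q : ℕ) :
    alternating true a ++ [○, ●, ●] ++ (replicate p ○ ++ alternating false a) ++ [◌, ◌, ◌] ++
        replicate q ●
      ⇝[2 * a + 1] [◌, ◌, ◌] ++ replicate (p + 2 * a + 1) ○ ++ replicate (q + 2 * a + 2) ● := by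
  induction a generalizing p q with
  | zero =>
    calc
      _ ⇝[1] [] ++ [◌, ◌, ◌] ++ (replicate p ○ ++ []) ++ [○, ●, ●] ++ replicate q ● :=
        reachesIn_one_right _ _ _ _ _ _
      _ = [◌, ◌, ◌] ++ replicate (p + 2 * 0 + 1) ○ ++ replicate (q + 2 * 0 + 2) ● := by
        simp [replicate_succ, replicate_append_cons_self]
  | succ a ih =>
    calc
      _ ⇝[1] alternating true (a + 1) ++ [◌, ◌, ◌] ++
          (replicate p ○ ++ alternating false (a + 1)) ++ [○, ●, ●] ++ replicate q ● :=
        reachesIn_one_right _ _ _ _ _ _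
      _ = alternating true (a + 1) ++ [◌, ◌, ◌] ++ (replicate p ○ ++ alternating false a) ++
          [●, ○, ○] ++ ([●, ●] ++ replicate q ●) := by
        simp [alternating_succ']
      _ ⇝[1] alternating true (a + 1) ++ [●, ○, ○] ++ (replicate p ○ ++ alternating false a) ++
          [◌, ◌, ◌] ++ ([●, ●] ++ replicate q ●) :=
        reachesIn_one_left _ _ _ _ _ _
      _ = alternating true a ++ [○, ●, ●] ++ (replicate (p + 2) ○ ++ alternating false a) ++
          [◌, ◌, ◌] ++ replicate (q + 2) ● := by
        simp [alternating_succ', replicate_succ]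
      _ ⇝[2 * a + 1] _ := ih (p + 2) (q + 2)
      _ = [◌, ◌, ◌] ++ replicate (p + 2 * (a + 1) + 1) ○ ++
          replicate (q + 2 * (a + 1) + 2) ● := by
        ring_nf

theorem reachesIn_two_mod_four (a : ℕ) :
    alternating true (2 * a + 3) ++ [◌, ◌, ◌]
      ⇝[2 * a + 3] [◌, ◌, ◌] ++ replicate (2 * a + 3) ○ ++ replicate (2 * a + 3) ● :=
  calc
    alternating true (2 * a + 3) ++ [◌, ◌, ◌]
    _ = (alternating true a ++ [○]) ++ [●, ○, ●] ++ alternating true (a + 1) ++ [◌, ◌, ◌] ++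
        [] := by
      rw [show 2 * a + 3 = a + 2 + (a + 1) by ring, alternating_add, alternating_add]
      simp [alternating]
    _ ⇝[1] (alternating true a ++ [○]) ++ [◌, ◌, ◌] ++ alternating true (a + 1) ++ [●, ○, ●] ++
        [] :=
      reachesIn_one_right _ _ _ _ _ _
    _ = (alternating true a ++ [○]) ++ [◌, ◌, ◌] ++ (alternating true a ++ [○]) ++ [●, ●, ○] ++
        [●] := by
      simp [alternating_succ']
    _ ⇝[1] (alternating true a ++ [○]) ++ [●, ●, ○] ++ (alternating true a ++ [○]) ++
        [◌, ◌, ◌] ++ [●] :=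
      reachesIn_one_left _ _ _ _ _ _
    _ = alternating true a ++ [○, ●, ●] ++ (replicate 2 ○ ++ alternating false a) ++ [◌, ◌, ◌] ++
        replicate 1 ● := by
      simp [alternating_append_cons, replicate_succ]
    _ ⇝[2 * a + 1] _ := reachesIn_collect a 2 1
    _ = [◌, ◌, ◌] ++ replicate (2 * a + 3) ○ ++ replicate (2 * a + 3) ● := by
      ring_nf

theorem reachesIn_opening (a : ℕ) :
    alternating true (a + 5) ++ [◌, ◌, ◌]
      ⇝[2] [○, ○, ●, ○, ○, ●] ++ (alternating true a ++ [◌, ◌, ◌]) ++ [●, ●, ○, ●] :=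
  calc
    alternating true (a + 5) ++ [◌, ◌, ◌]
    _ = [○] ++ [●, ○, ●] ++ ([○, ●] ++ alternating true (a + 2)) ++ [◌, ◌, ◌] ++ [] := by
      simp [alternating]
    _ ⇝[1] [○] ++ [◌, ◌, ◌] ++ ([○, ●] ++ alternating true (a + 2)) ++ [●, ○, ●] ++ [] :=
      reachesIn_one_right _ _ _ _ _ _
    _ = [○] ++ [◌, ◌, ◌] ++ ([○, ●] ++ alternating true a) ++ [○, ●, ○] ++ [●, ●, ○, ●] := by
      simp [alternating_succ']
    _ ⇝[1] [○] ++ [○, ●, ○] ++ ([○, ●] ++ alternating true a) ++ [◌, ◌, ◌] ++ [●, ●, ○, ●] :=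
      reachesIn_one_left _ _ _ _ _ _
    _ = [○, ○, ●, ○, ○, ●] ++ (alternating true a ++ [◌, ◌, ◌]) ++ [●, ●, ○, ●] := by
      simp

theorem reachesIn_closing (a b : ℕ) :
    [○, ○, ●, ○, ○, ●] ++ ([◌, ◌, ◌] ++ replicate (a + 2) ○ ++ replicate b ●) ++ [●, ●, ○, ●]
      ⇝[4] [◌, ◌, ◌] ++ replicate (a + 7) ○ ++ replicate (b + 5) ● :=
  calc
    _ = [○, ○, ●, ○, ○, ●] ++ [◌, ◌, ◌] ++ (replicate (a + 2) ○ ++ replicate b ●) ++ [●, ●, ○] ++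
        [●] := by
      simp
    _ ⇝[1] [○, ○, ●, ○, ○, ●] ++ [●, ●, ○] ++ (replicate (a + 2) ○ ++ replicate b ●) ++
        [◌, ◌, ◌] ++ [●] :=
      reachesIn_one_left _ _ _ _ _ _
    _ = [○, ○, ●, ○, ○] ++ [●, ●, ●] ++ ([○] ++ replicate (a + 2) ○ ++ replicate b ●) ++
        [◌, ◌, ◌] ++ [●] := by
      simp
    _ ⇝[1] [○, ○, ●, ○, ○] ++ [◌, ◌, ◌] ++ ([○] ++ replicate (a + 2) ○ ++ replicate b ●) ++
        [●, ●, ●] ++ [●] :=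
      reachesIn_one_right _ _ _ _ _ _
    _ = [○, ○, ●, ○, ○] ++ [◌, ◌, ◌] ++ replicate a ○ ++ [○, ○, ○] ++ replicate (b + 4) ● := by
      simp [replicate_succ, replicate_append_cons_self]
    _ ⇝[1] [○, ○, ●, ○, ○] ++ [○, ○, ○] ++ replicate a ○ ++ [◌, ◌, ◌] ++ replicate (b + 4) ● :=
      reachesIn_one_left _ _ _ _ _ _
    _ = [] ++ [○, ○, ●] ++ replicate (a + 5) ○ ++ [◌, ◌, ◌] ++ replicate (b + 4) ● := by
      simp [replicate_succ]
    _ ⇝[1] [] ++ [◌, ◌, ◌] ++ replicate (a + 5) ○ ++ [○, ○, ●] ++ replicate (b + 4) ● :=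
      reachesIn_one_right _ _ _ _ _ _
    _ = [◌, ◌, ◌] ++ replicate (a + 7) ○ ++ replicate (b + 5) ● := by
      simp [replicate_succ, replicate_append_cons_self]

theorem reachesIn_zero_mod_four (a : ℕ) :
    alternating true (2 * a + 8) ++ [◌, ◌, ◌]
      ⇝[4 + (2 * a + 5)] [◌, ◌, ◌] ++ replicate (2 * a + 8) ○ ++ replicate (2 * a + 8) ● :=
  calc
    _ ⇝[2] _ := reachesIn_opening (2 * a + 3)
    _ ⇝[2 * a + 3] _ :=
      (reachesIn_two_mod_four a).map ([○, ○, ●, ○, ○, ●] ++ · ++ [●, ●, ○, ●])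
        fun _ _ h => h.append _ _
    _ ⇝[4] _ := reachesIn_closing (2 * a + 1) (2 * a + 3)

end Solution

theorem h_three_moves_zero_mod_four (n : ℕ) (hn : 16 ≤ n) (hmod : n % 4 = 0) :
    SortsIn 3 n (n / 2 + 1) ∧ ∀ m : ℕ, SortsIn 3 n m → n / 2 ≤ m := by
  refine ⟨?_, fun m h => h.half_le (by omega)⟩
  obtain ⟨a, rfl⟩ : ∃ a, n = 2 * (2 * a + 8) := ⟨(n - 16) / 4, by omega⟩
  rw [show 2 * (2 * a + 8) / 2 + 1 = 4 + (2 * a + 5) by omega]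
  exact sortsIn_of_reachesIn (b := 3) (g := 3) (reachesIn_zero_mod_four a)
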